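/- arXiv:0802.3819 — 12 statements merged into one kernel-verified Lean document; each statement's English description precedes it below -/
import Mathlib

section
/- Let L ⊆ ℰ be a subspace with L = L^⊥, and let n = dim V. Then dim L = (1 − n)·dim 𝐛(L) + n², equivalently dim L = dim 𝐛(L) + n·(n − dim 𝐛(L)). -/
variable {V : Type*} [AddCommGroup V] [Module ℝ V] [FiniteDimensional ℝ V]

/-- The bracket of the omni-Lie algebra `ℰ = End(V) × V`:
`⦃(A,u),(B,v)⦄ = (A∘B − B∘A, A(v))`. -/
def obr (X Y : (V →ₗ[ℝ] V) × V) : (V →ₗ[ℝ] V) × V :=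
  (X.1 ∘ₗ Y.1 - Y.1 ∘ₗ X.1, X.1 Y.2)

/-- The symmetric `V`-valued pairing `⟨(A,u),(B,v)⟩ = (1/2)(A(v) + B(u))`. -/
noncomputable def opair (X Y : (V →ₗ[ℝ] V) × V) : V :=
  (1/2 : ℝ) • (X.1 Y.2 + Y.1 X.2)

/-- `S^⊥ = {X ∈ ℰ : ⟨X,l⟩ = 0 for all l ∈ S}`. -/
def perpSet (S : Set ((V →ₗ[ℝ] V) × V)) : Set ((V →ₗ[ℝ] V) × V) :=
  {X | ∀ l ∈ S, opair X l = 0}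

/-- If `L = L^⊥` and `n = dim V`, then `dim L = (1 − n)·dim 𝐛(L) + n²`,
equivalently `dim L = dim 𝐛(L) + n·(n − dim 𝐛(L))`. -/
theorem maximal_isotropic_dim (L : Submodule ℝ ((V →ₗ[ℝ] V) × V))
    (hL : (L : Set ((V →ₗ[ℝ] V) × V)) = perpSet (L : Set ((V →ₗ[ℝ] V) × V))) :
    (Module.finrank ℝ L : ℤ) =
      (1 - (Module.finrank ℝ V : ℤ)) *
          Module.finrank ℝ (L.map (LinearMap.snd ℝ (V →ₗ[ℝ] V) V)) +
        (Module.finrank ℝ V : ℤ) ^ 2 ∧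
    Module.finrank ℝ L =
      Module.finrank ℝ (L.map (LinearMap.snd ℝ (V →ₗ[ℝ] V) V)) +
        Module.finrank ℝ V *
          (Module.finrank ℝ V - Module.finrank ℝ (L.map (LinearMap.snd ℝ (V →ₗ[ℝ] V) V))) := by
  set b := L.map (LinearMap.snd ℝ (V →ₗ[ℝ] V) V) with hb
  have hmem : ∀ X, X ∈ L ↔ ∀ l ∈ L, opair X l = 0 := fun X => by
    have : X ∈ (L : Set ((V →ₗ[ℝ] V) × V)) ↔ X ∈ perpSet (L : Set ((V →ₗ[ℝ] V) × V)) := by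
      rw [← hL]
    exact this
  let f : L →ₗ[ℝ] V := (LinearMap.snd ℝ (V →ₗ[ℝ] V) V).domRestrict L
  have hrange : LinearMap.range f = b := by
    rw [hb]
    exact LinearMap.range_domRestrict L _
  have h1 := LinearMap.finrank_range_add_finrank_ker f
  rw [hrange] at h1
  let g : ((V ⧸ b) →ₗ[ℝ] V) →ₗ[ℝ] ((V →ₗ[ℝ] V) × V) :=
    (LinearMap.inl ℝ (V →ₗ[ℝ] V) V) ∘ₗ (LinearMap.lcomp ℝ V b.mkQ)
  have hg : ∀ φ, g φ = (φ ∘ₗ b.mkQ, 0) := fun φ => rfl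
  have hginj : Function.Injective g := by
    intro φ ψ h
    rw [hg, hg] at h
    have h2 := congrArg Prod.fst h
    exact (LinearMap.cancel_right b.mkQ_surjective).1 h2
  have hgr : LinearMap.range g = (LinearMap.ker f).map L.subtype := by
    ext X
    constructor
    · rintro ⟨φ, rfl⟩
      have hm : g φ ∈ L := by
        rw [hmem]
        intro l hl
        have hlb : l.2 ∈ b := ⟨l, hl, rfl⟩
        have h0 : b.mkQ l.2 = 0 := by simpa using hlb
        simp [opair, hg, -Submodule.mkQ_apply, h0]
      exact ⟨⟨g φ, hm⟩, rfl, rfl⟩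
    · rintro ⟨⟨⟨A, u⟩, hX⟩, hk, rfl⟩
      have hu : u = 0 := hk
      subst hu
      have hA : b ≤ LinearMap.ker A := by
        rintro _ ⟨l, hl, rfl⟩
        have := (hmem _).1 hX l hl
        simpa [opair] using this
      refine ⟨b.liftQ A hA, ?_⟩
      rw [hg, Submodule.liftQ_mkQ]
      rfl
  have h3 : Module.finrank ℝ (LinearMap.ker f) =
      (Module.finrank ℝ V - Module.finrank ℝ b) * Module.finrank ℝ V := by
    rw [← Submodule.finrank_map_subtype_eq L (LinearMap.ker f), ← hgr, LinearMap.finrank_range_of_inj hginj,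
      Module.finrank_linearMap, Submodule.finrank_quotient]
  have hle : Module.finrank ℝ b ≤ Module.finrank ℝ V := Submodule.finrank_le b
  rw [h3] at h1
  constructor
  · rw [← h1]
    push_cast [Nat.cast_sub hle]
    ring
  · rw [← h1, mul_comm]
end

section
/- Let L ⊆ ℰ be a subspace with L = L^⊥, and let W = 𝐛(L). Then there exists a linear map s : W → ℰ whose image lies in L, satisfying 𝐛∘s = id_W and L = s(W) + W⁰; moreover s(W) is isotropic, i.e. ⟨s(w), s(w')⟩ = 0 for all w, w' ∈ W. -/
variable {V : Type*} [AddCommGroup V] [Module ℝ V] [FiniteDimensional ℝ V]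

/-- `W⁰ = {(A,0) ∈ ℰ : A(w) = 0 for all w ∈ W}`. -/
def ann (W : Submodule ℝ V) : Submodule ℝ ((V →ₗ[ℝ] V) × V) where
  carrier := {X | X.2 = 0 ∧ ∀ w ∈ W, X.1 w = 0}
  add_mem' := by
    rintro X Y ⟨hX2, hX1⟩ ⟨hY2, hY1⟩
    exact ⟨by simp [hX2, hY2], fun w hw => by simp [hX1 w hw, hY1 w hw]⟩
  zero_mem' := ⟨rfl, fun w _ => rfl⟩
  smul_mem' := by
    rintro c X ⟨hX2, hX1⟩
    exact ⟨by simp [hX2], fun w hw => by simp [hX1 w hw]⟩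

/-- If `L = L^⊥` and `W = 𝐛(L)`, there is a linear isotropic section `s : W → ℰ`
with image in `L`, `𝐛 ∘ s = id`, and `L = s(W) + W⁰`. -/
theorem maximal_isotropic_section (L : Submodule ℝ ((V →ₗ[ℝ] V) × V))
    (hL : (L : Set ((V →ₗ[ℝ] V) × V)) = perpSet (L : Set ((V →ₗ[ℝ] V) × V)))
    (W : Submodule ℝ V) (hW : W = L.map (LinearMap.snd ℝ (V →ₗ[ℝ] V) V)) :
    ∃ s : W →ₗ[ℝ] (V →ₗ[ℝ] V) × V,
      (∀ w : W, s w ∈ L) ∧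
      (∀ w : W, (s w).2 = (w : V)) ∧
      L = LinearMap.range s ⊔ ann W ∧
      (∀ w w' : W, opair (s w) (s w') = 0) := by
  have mem_iff : ∀ X, X ∈ L ↔ ∀ l ∈ L, opair X l = 0 := fun X => by
    have h := Set.ext_iff.mp hL X
    exact h
  have hsnd : ∀ X ∈ L, X.2 ∈ W := fun X hX => by
    rw [hW]
    exact ⟨X, hX, rfl⟩
  have hann : ann W ≤ L := by
    rintro X ⟨h2, h1⟩
    rw [mem_iff]
    intro l hl
    simp [opair, h2, h1 _ (hsnd l hl)]
  let b : L →ₗ[ℝ] W :=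
    ((LinearMap.snd ℝ (V →ₗ[ℝ] V) V).comp L.subtype).codRestrict W
      (fun x => hsnd x.1 x.2)
  have hb : Function.Surjective b := by
    rintro ⟨w, hw⟩
    have hw' := hw
    rw [hW] at hw'
    obtain ⟨X, hX, rfl⟩ := hw'
    exact ⟨⟨X, hX⟩, rfl⟩
  obtain ⟨t, ht⟩ := b.exists_rightInverse_of_surjective (LinearMap.range_eq_top.mpr hb)
  have hs2 : ∀ w : W, ((t w : L) : (V →ₗ[ℝ] V) × V).2 = (w : V) := fun w =>
    congrArg Subtype.val (LinearMap.congr_fun ht w)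
  refine ⟨L.subtype.comp t, fun w => (t w).2, hs2, ?_, fun w w' =>
    (mem_iff _).mp (t w).2 _ (t w').2⟩
  apply le_antisymm
  · intro X hX
    refine Submodule.mem_sup.mpr ⟨t ⟨X.2, hsnd X hX⟩, ⟨_, rfl⟩,
      X - t ⟨X.2, hsnd X hX⟩, ⟨?_, ?_⟩, by abel⟩
    · simp [hs2]
    · intro w hw
      have hD : X - t ⟨X.2, hsnd X hX⟩ ∈ L := L.sub_mem hX (t _).2
      have h := (mem_iff _).mp hD _ (t ⟨w, hw⟩).2
      have h0 : (X - (t ⟨X.2, hsnd X hX⟩ : (V →ₗ[ℝ] V) × V)).2 = 0 := by simp [hs2]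
      unfold opair at h
      rw [h0, hs2, map_zero, add_zero] at h
      exact (smul_eq_zero.mp h).resolve_left (by norm_num)
  · refine sup_le ?_ hann
    rintro _ ⟨w, rfl⟩
    exact (t w).2
end

section
/- Let W ⊆ V be a subspace and s : W → ℰ a linear map with 𝐛∘s = id_W whose image is isotropic (⟨s(w), s(w')⟩ = 0 for all w, w' ∈ W). Then the subspace L = s(W) + W⁰ satisfies L = L^⊥ and 𝐛(L) = W. -/
variable {V : Type*} [AddCommGroup V] [Module ℝ V] [FiniteDimensional ℝ V]

/-- Given an isotropic linear section `s : W → ℰ` with `𝐛 ∘ s = id`, the subspace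
`L = s(W) + W⁰` satisfies `L = L^⊥` and `𝐛(L) = W`. -/
theorem isotropic_section_gives_maximal_isotropic (W : Submodule ℝ V)
    (s : W →ₗ[ℝ] (V →ₗ[ℝ] V) × V)
    (hsec : ∀ w : W, (s w).2 = (w : V))
    (hiso : ∀ w w' : W, opair (s w) (s w') = 0) :
    ((LinearMap.range s ⊔ ann W : Submodule ℝ ((V →ₗ[ℝ] V) × V)) : Set ((V →ₗ[ℝ] V) × V)) =
        perpSet ((LinearMap.range s ⊔ ann W : Submodule ℝ ((V →ₗ[ℝ] V) × V)) :
          Set ((V →ₗ[ℝ] V) × V)) ∧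
      (LinearMap.range s ⊔ ann W).map (LinearMap.snd ℝ (V →ₗ[ℝ] V) V) = W := by
  have pair0 : ∀ X Y : (V →ₗ[ℝ] V) × V, opair X Y = 0 ↔ X.1 Y.2 + Y.1 X.2 = 0 := by
    intro X Y
    unfold opair
    exact smul_eq_zero_iff_right (by norm_num)
  constructor
  · apply Set.Subset.antisymm
    · intro X hX l hl
      obtain ⟨_, ⟨w, rfl⟩, a, ha, rfl⟩ := Submodule.mem_sup.1 hX
      obtain ⟨_, ⟨v, rfl⟩, b, hb, rfl⟩ := Submodule.mem_sup.1 hl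
      obtain ⟨ha2, ha1⟩ := ha
      obtain ⟨hb2, hb1⟩ := hb
      have h := (pair0 _ _).1 (hiso w v)
      rw [hsec, hsec] at h
      rw [pair0]
      simp only [Prod.fst_add, Prod.snd_add, ha2, hb2, hsec, add_zero, LinearMap.add_apply,
        ha1 _ v.2, hb1 _ w.2]
      exact h
    · intro X hX
      have hu : X.2 ∈ W := by
        by_contra hu
        obtain ⟨f, hf, hfW⟩ := Submodule.exists_le_ker_of_notMem hu
        have hB : ((f.smulRight X.2, 0) : (V →ₗ[ℝ] V) × V) ∈ ann W := by
          refine ⟨rfl, fun w hw => ?_⟩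
          have : f w = 0 := hfW hw
          simp [this]
        have h := (pair0 _ _).1 (hX _ (Submodule.mem_sup_right hB))
        simp only [map_zero, zero_add, LinearMap.smulRight_apply, smul_eq_zero] at h
        rcases h with h | h
        · exact hf h
        · exact hu (h ▸ W.zero_mem)
      refine Submodule.mem_sup.2 ⟨s ⟨X.2, hu⟩, ⟨_, rfl⟩, X - s ⟨X.2, hu⟩, ⟨?_, ?_⟩, by abel⟩
      · simp [hsec]
      · intro w hw
        have h1 := (pair0 _ _).1 (hX _ (Submodule.mem_sup_left ⟨⟨w, hw⟩, rfl⟩))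
        have h2 := (pair0 _ _).1 (hiso ⟨X.2, hu⟩ ⟨w, hw⟩)
        rw [hsec] at h1
        rw [hsec, hsec] at h2
        simp only [Prod.fst_sub, LinearMap.sub_apply]
        exact sub_eq_zero.2 (add_right_cancel (h1.trans h2.symm))
  · ext u
    constructor
    · rintro ⟨X, hX, rfl⟩
      obtain ⟨_, ⟨w, rfl⟩, a, ha, rfl⟩ := Submodule.mem_sup.1 hX
      simp [hsec, ha.1]
    · intro hu
      exact ⟨s ⟨u, hu⟩, Submodule.mem_sup_left ⟨_, rfl⟩, hsec _⟩
end

section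
/- Let L ⊆ ℰ be a Dirac structure and W = 𝐛(L). Then there is a unique bilinear map [·,·] : W × W → V such that [u,v] = A(v) whenever (A,u) ∈ L and v ∈ W (in particular A(v) is independent of the choice of A with (A,u) ∈ L); this bracket takes values in W, is antisymmetric, and satisfies the Jacobi identity, so that (W, [·,·]) is a real Lie algebra. -/
variable {V : Type*} [AddCommGroup V] [Module ℝ V] [FiniteDimensional ℝ V]

/-- A Dirac structure `L ⊆ ℰ` induces, on `W = 𝐛(L)`, a unique bilinear bracket with
`[u,v] = A(v)` whenever `(A,u) ∈ L` and `v ∈ W`; this bracket takes values in `W`,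
is antisymmetric and satisfies the Jacobi identity, i.e. `(W,[·,·])` is a Lie algebra. -/
theorem dirac_induces_lie_algebra (L : Submodule ℝ ((V →ₗ[ℝ] V) × V))
    (hL : (L : Set ((V →ₗ[ℝ] V) × V)) = perpSet (L : Set ((V →ₗ[ℝ] V) × V)))
    (hclosed : ∀ X ∈ L, ∀ Y ∈ L, obr X Y ∈ L)
    (W : Submodule ℝ V) (hW : W = L.map (LinearMap.snd ℝ (V →ₗ[ℝ] V) V)) :
    ∃ br : W →ₗ[ℝ] W →ₗ[ℝ] W,
      (∀ (A : V →ₗ[ℝ] V) (u v : W), (A, (u : V)) ∈ L → (br u v : V) = A v) ∧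
      (∀ br' : W →ₗ[ℝ] W →ₗ[ℝ] V,
        (∀ (A : V →ₗ[ℝ] V) (u v : W), (A, (u : V)) ∈ L → br' u v = A v) →
          ∀ u v : W, br' u v = (br u v : V)) ∧
      (∀ u v : W, br u v = - br v u) ∧
      (∀ u v w : W, br u (br v w) + br v (br w u) + br w (br u v) = 0) := by
  have key : ∀ X ∈ L, ∀ Y ∈ L, X.1 Y.2 = - Y.1 X.2 := by
    intro X hX Y hY
    have h : X ∈ perpSet (L : Set ((V →ₗ[ℝ] V) × V)) := by
      rw [← hL]; exact hX
    have h2 := h Y hY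
    unfold opair at h2
    rcases smul_eq_zero.mp h2 with h3 | h3
    · norm_num at h3
    · exact eq_neg_of_add_eq_zero_left h3
  have ex : ∀ u : W, ∃ A : V →ₗ[ℝ] V, (A, (u : V)) ∈ L := by
    intro u
    have hu : (u : V) ∈ L.map (LinearMap.snd ℝ (V →ₗ[ℝ] V) V) := by
      rw [← hW]; exact u.2
    obtain ⟨⟨A, u'⟩, hA, hu'⟩ := hu
    refine ⟨A, ?_⟩
    rw [← hu']; exact hA
  choose F hF using ex
  have indep : ∀ (A : V →ₗ[ℝ] V) (u v : W), (A, (u : V)) ∈ L → F u v = A v := by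
    intro A u v hA
    have h1 := key _ hA _ (hF v)
    have h2 := key _ (hF u) _ (hF v)
    exact h2.trans h1.symm
  have memW : ∀ u v : W, F u v ∈ W := by
    intro u v
    have h := hclosed _ (hF u) _ (hF v)
    have h2 : F u v ∈ L.map (LinearMap.snd ℝ (V →ₗ[ℝ] V) V) := ⟨_, h, rfl⟩
    exact hW.symm ▸ h2
  have anti : ∀ u v : W, F u v = - F v u := fun u v => key _ (hF u) _ (hF v)
  refine ⟨LinearMap.mk₂ ℝ (fun u v => (⟨F u v, memW u v⟩ : W)) ?_ ?_ ?_ ?_, ?_, ?_, ?_, ?_⟩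
  · intro u u' v
    apply Subtype.ext
    exact indep (F u + F u') (u + u') v (L.add_mem (hF u) (hF u'))
  · intro c u v
    apply Subtype.ext
    exact indep (c • F u) (c • u) v (L.smul_mem c (hF u))
  · intro u v v'
    apply Subtype.ext
    exact map_add (F u) (v : V) v'
  · intro c u v
    apply Subtype.ext
    exact map_smul (F u) c (v : V)
  · intro A u v hA
    exact indep A u v hA
  · intro br' h u v
    exact h (F u) u v (hF u)
  · intro u v
    apply Subtype.ext
    exact anti u v
  · intro u v w
    apply Subtype.ext
    change F u (F v w) + F v (F w u) + F w (F u v) = 0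
    have h1 : F w (F u v) = - (F u (F v w) - F v (F u w)) :=
      key _ (hF w) _ (hclosed _ (hF u) _ (hF v))
    rw [h1, anti w u, map_neg]
    abel
end

section
/- Let W ⊆ V be a subspace equipped with a Lie bracket [·,·]. Then the lifted subspace L_W = {(A,u) ∈ ℰ : u ∈ W and A(w) = [u,w] for all w ∈ W} satisfies L_W = L_W^⊥, is closed under the bracket ⦃·,·⦄ (hence is a Dirac structure), 𝐛(L_W) = W, and the induced bracket on W is the given one: A(v) = [u,v] for all (A,u) ∈ L_W and v ∈ W. -/
variable {V : Type*} [AddCommGroup V] [Module ℝ V] [FiniteDimensional ℝ V]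

/-- The lifted Dirac structure `L_W = {(A,u) ∈ ℰ : u ∈ W and A(w) = [u,w] for all w ∈ W}`
of a subspace `W ⊆ V` equipped with a bilinear bracket `br`. -/
def liftSet (W : Submodule ℝ V) (br : W →ₗ[ℝ] W →ₗ[ℝ] W) :
    Set ((V →ₗ[ℝ] V) × V) :=
  {X | ∃ hu : X.2 ∈ W, ∀ w : W, X.1 w = (br ⟨X.2, hu⟩ w : V)}

/-- For a subspace `W ⊆ V` with a Lie bracket, the lifted subspace `L_W` satisfies
`L_W = L_W^⊥`, is closed under the bracket (hence is a Dirac structure), projects onto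
`W`, and induces the given bracket on `W`. -/
theorem lift_is_dirac (W : Submodule ℝ V) (br : W →ₗ[ℝ] W →ₗ[ℝ] W)
    (hskew : ∀ v w : W, br v w = - br w v)
    (hjacobi : ∀ u v w : W, br u (br v w) + br v (br w u) + br w (br u v) = 0) :
    liftSet W br = perpSet (liftSet W br) ∧
    (∀ X ∈ liftSet W br, ∀ Y ∈ liftSet W br, obr X Y ∈ liftSet W br) ∧
    Prod.snd '' liftSet W br = (W : Set V) ∧
    (∀ (A : V →ₗ[ℝ] V) (u : W), (A, (u : V)) ∈ liftSet W br →
      ∀ v : W, A v = (br u v : V)) := by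
  have ext : ∀ u : W, ∃ A : V →ₗ[ℝ] V, ∀ w : W, A w = (br u w : V) := by
    intro u
    obtain ⟨g, hg⟩ := LinearMap.exists_extend (p := W) (W.subtype ∘ₗ br u)
    exact ⟨g, fun w => by simpa using LinearMap.congr_fun hg w⟩
  have memW : ∀ X ∈ perpSet (liftSet W br), X.2 ∈ W := by
    intro X hX
    obtain ⟨g, hg⟩ := LinearMap.exists_extend (p := W) (LinearMap.id : W →ₗ[ℝ] W)
    have hg' : ∀ w : W, g w = w := fun w => by simpa using LinearMap.congr_fun hg w
    have h := hX (LinearMap.id - W.subtype ∘ₗ g, 0)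
      ⟨W.zero_mem, fun w => by
        have h0 : (⟨(0 : V), W.zero_mem⟩ : W) = 0 := rfl
        simp [hg', h0]⟩
    have h2 : X.2 - (g X.2 : V) = 0 := by simpa [opair] using h
    rw [sub_eq_zero.mp h2]
    exact (g X.2).2
  refine ⟨?_, ?_, ?_, ?_⟩
  · ext ⟨A, u⟩
    constructor
    · rintro ⟨hu, hA⟩ ⟨B, v⟩ ⟨hv, hB⟩
      simp only at hu hA hv hB
      have h1 := hA ⟨v, hv⟩
      have h2 := hB ⟨u, hu⟩
      simp only at h1 h2
      rw [hskew] at h1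
      simp [opair, h1, h2]
    · intro hX
      have hu : u ∈ W := memW _ hX
      refine ⟨hu, fun w => ?_⟩
      obtain ⟨B, hB⟩ := ext w
      have h := hX (B, (w : V)) ⟨w.2, hB⟩
      have h2 : A w + B u = 0 := (smul_eq_zero.mp h).resolve_left (by norm_num)
      have h3 := hB ⟨u, hu⟩
      simp only at h3
      rw [h3] at h2
      change A w = _
      rw [hskew, eq_neg_of_add_eq_zero_left h2]
      simp
  · rintro ⟨A, u⟩ ⟨hu, hA⟩ ⟨B, v⟩ ⟨hv, hB⟩
    simp only at hu hA hv hB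
    have h1 : A v = (br ⟨u, hu⟩ ⟨v, hv⟩ : V) := hA ⟨v, hv⟩
    have hm : A v ∈ W := by rw [h1]; exact Subtype.property _
    refine ⟨hm, fun w => ?_⟩
    have he : (⟨A v, hm⟩ : W) = br ⟨u, hu⟩ ⟨v, hv⟩ := Subtype.ext h1
    change A (B w) - B (A w) = (br ⟨A v, hm⟩ w : V)
    rw [he, hB, hA, hA, hB, ← Submodule.coe_sub]
    congr 1
    have hj := hjacobi ⟨u, hu⟩ ⟨v, hv⟩ w
    rw [hskew w ⟨u, hu⟩, hskew w (br _ _), map_neg] at hj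
    rw [← sub_eq_zero, ← hj]
    abel
  · ext u
    constructor
    · rintro ⟨X, ⟨hu, -⟩, rfl⟩
      exact hu
    · intro hu
      obtain ⟨A, hA⟩ := ext ⟨u, hu⟩
      exact ⟨(A, u), ⟨hu, hA⟩, rfl⟩
  · rintro A u ⟨_, hA⟩ v
    exact hA v
end

section
/- Let W ⊆ V be a subspace equipped with a Lie bracket [·,·], and let L ⊆ ℰ be a Dirac structure such that 𝐛(L) = W and A(v) = [u,v] for every (A,u) ∈ L and v ∈ W. Then L equals the lifted Dirac structure: L = L_W. In particular, a Dirac structure is uniquely determined by the Lie algebra it induces on its projection to V. -/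
variable {V : Type*} [AddCommGroup V] [Module ℝ V] [FiniteDimensional ℝ V]

/-- A Dirac structure `L` with `𝐛(L) = W` inducing the bracket of `(W,[·,·])`
coincides with the lifted Dirac structure `L_W`: Dirac structures are uniquely
determined by the Lie algebras they induce on their projections. -/
theorem dirac_unique_lift (W : Submodule ℝ V) (br : W →ₗ[ℝ] W →ₗ[ℝ] W)
    (hskew : ∀ v w : W, br v w = - br w v)
    (hjacobi : ∀ u v w : W, br u (br v w) + br v (br w u) + br w (br u v) = 0)
    (L : Submodule ℝ ((V →ₗ[ℝ] V) × V))
    (hL : (L : Set ((V →ₗ[ℝ] V) × V)) = perpSet (L : Set ((V →ₗ[ℝ] V) × V)))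
    (hclosed : ∀ X ∈ L, ∀ Y ∈ L, obr X Y ∈ L)
    (hproj : L.map (LinearMap.snd ℝ (V →ₗ[ℝ] V) V) = W)
    (hbr : ∀ (A : V →ₗ[ℝ] V) (u : W), (A, (u : V)) ∈ L → ∀ v : W, A v = (br u v : V)) :
    (L : Set ((V →ₗ[ℝ] V) × V)) = liftSet W br := by
  have hsnd : ∀ l ∈ L, l.2 ∈ W := fun l hl => by
    rw [← hproj]
    exact ⟨l, hl, rfl⟩
  apply Set.Subset.antisymm
  · rintro ⟨A, u⟩ hX
    exact ⟨hsnd _ hX, fun w => hbr A ⟨u, hsnd _ hX⟩ hX w⟩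
  · rintro ⟨A, u⟩ ⟨hu, hA⟩
    rw [hL]
    rintro ⟨B, v⟩ hl
    have hv : v ∈ W := hsnd _ hl
    have h1 : A v = (br ⟨u, hu⟩ ⟨v, hv⟩ : V) := hA ⟨v, hv⟩
    have h2 : B u = (br ⟨v, hv⟩ ⟨u, hu⟩ : V) := hbr B ⟨v, hv⟩ hl ⟨u, hu⟩
    have h3 : (br ⟨u, hu⟩ ⟨v, hv⟩ : V) = -(br ⟨v, hv⟩ ⟨u, hu⟩ : V) := by
      rw [hskew]
      rfl
    simp only [opair]
    rw [h1, h2, h3, neg_add_cancel, smul_zero]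
end

section
/- Let π : V → End(V) be a linear map that is skew-symmetric in the sense that π(u)(v) = −π(v)(u) for all u, v ∈ V, and let G_π = {(π(u), u) : u ∈ V} ⊆ ℰ be its graph. Then G_π = G_π^⊥; moreover the following are equivalent: (i) G_π is closed under the bracket ⦃·,·⦄ (i.e. G_π is a Dirac structure); (ii) π(π(u)(v)) = π(u)∘π(v) − π(v)∘π(u) for all u, v ∈ V; (iii) the bracket (u,v) ↦ π(u)(v) makes V a Lie algebra. -/
variable {V : Type*} [AddCommGroup V] [Module ℝ V] [FiniteDimensional ℝ V]

/-- For a skew-symmetric linear map `π : V → End(V)` with graph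
`G_π = {(π(u),u) : u ∈ V}`: `G_π = G_π^⊥`, and the following are equivalent:
(i) `G_π` is closed under the bracket; (ii) `π(π(u)(v)) = π(u)∘π(v) − π(v)∘π(u)`;
(iii) `(u,v) ↦ π(u)(v)` is a Lie bracket on `V`. -/
theorem graph_dirac_characterization (π : V →ₗ[ℝ] V →ₗ[ℝ] V)
    (hskew : ∀ u v : V, π u v = - π v u) :
    ({X | X.1 = π X.2} : Set ((V →ₗ[ℝ] V) × V)) =
        perpSet ({X | X.1 = π X.2} : Set ((V →ₗ[ℝ] V) × V)) ∧
    ((∀ X ∈ ({X | X.1 = π X.2} : Set ((V →ₗ[ℝ] V) × V)),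
        ∀ Y ∈ ({X | X.1 = π X.2} : Set ((V →ₗ[ℝ] V) × V)),
          obr X Y ∈ ({X | X.1 = π X.2} : Set ((V →ₗ[ℝ] V) × V))) ↔
      (∀ u v : V, π (π u v) = π u ∘ₗ π v - π v ∘ₗ π u)) ∧
    ((∀ u v : V, π (π u v) = π u ∘ₗ π v - π v ∘ₗ π u) ↔
      (∀ u v w : V, π u (π v w) + π v (π w u) + π w (π u v) = 0)) := by
  refine ⟨?_, ?_, ?_⟩
  · ext ⟨A, u⟩
    simp only [perpSet, opair, Set.mem_setOf_eq]
    constructor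
    · rintro h ⟨B, v⟩ hB
      simp only at h hB ⊢
      rw [h, hB, hskew u v, neg_add_cancel, smul_zero]
    · intro h
      ext v
      have h1 := h (π v, v) rfl
      rw [smul_eq_zero] at h1
      rcases h1 with h1 | h1
      · norm_num at h1
      · simp only at h1
        rw [hskew u v]
        exact eq_neg_of_add_eq_zero_left h1
  · constructor
    · intro h u v
      exact (h (π u, u) rfl (π v, v) rfl).symm
    · rintro h ⟨A, u⟩ hA ⟨B, v⟩ hB
      simp only [Set.mem_setOf_eq] at hA hB
      subst hA hB
      exact (h u v).symm
  · have key : ∀ u v w : V, π u (π v w) + π v (π w u) + π w (π u v) =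
        (π u ∘ₗ π v - π v ∘ₗ π u) w - π (π u v) w := by
      intro u v w
      rw [LinearMap.sub_apply, LinearMap.comp_apply, LinearMap.comp_apply,
        hskew (π u v) w, hskew w u, map_neg]
      abel
    constructor
    · intro h u v w
      rw [key, h, sub_self]
    · intro h u v
      ext w
      have h1 := h u v w
      rw [key] at h1
      exact (sub_eq_zero.mp h1).symm
end

section
/- Let W ⊆ V be a subspace with a Lie bracket [·,·] and L_W its lifted Dirac structure. If (A,u) ∈ ℰ belongs to the normalizer N_{L_W}, then A(W) ⊆ W and the restriction of A to W is a derivation of the Lie algebra (W,[·,·]): A[v,w] = [A(v),w] + [v,A(w)] for all v, w ∈ W. -/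
variable {V : Type*} [AddCommGroup V] [Module ℝ V] [FiniteDimensional ℝ V]

/-- If `(A,u)` is in the normalizer of the lifted Dirac structure `L_W`, then
`A(W) ⊆ W` and `A` restricts to a derivation of the Lie algebra `(W,[·,·])`. -/
theorem normalizer_gives_derivation (W : Submodule ℝ V) (br : W →ₗ[ℝ] W →ₗ[ℝ] W)
    (hskew : ∀ v w : W, br v w = - br w v)
    (hjacobi : ∀ u v w : W, br u (br v w) + br v (br w u) + br w (br u v) = 0)
    (A : V →ₗ[ℝ] V) (u : V)
    (hnorm : ∀ l ∈ liftSet W br, obr (A, u) l ∈ liftSet W br) :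
    ∃ δ : W →ₗ[ℝ] W,
      (∀ w : W, (δ w : V) = A w) ∧
      (∀ v w : W, δ (br v w) = br (δ v) w + br v (δ w)) := by
  have key : ∀ v : W, ∃ h : A v ∈ W, ∀ w : W, ∀ h' : A w ∈ W,
      A (br v w) - (br v ⟨A w, h'⟩ : V) = (br ⟨A v, h⟩ w : V) := by
    intro v
    obtain ⟨B, hB⟩ := LinearMap.exists_extend (W.subtype ∘ₗ br v)
    have hB' : ∀ w : W, B w = (br v w : V) := fun w => by
      simpa using LinearMap.congr_fun hB w
    obtain ⟨h, h2⟩ := hnorm (B, (v : V)) ⟨v.2, hB'⟩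
    refine ⟨h, fun w h' => ?_⟩
    have h3 := h2 w
    have h4 := hB' ⟨A w, h'⟩
    have h5 : A (B w) - B (A w) = (br ⟨A v, h⟩ w : V) := h3
    rw [hB' w] at h5
    rw [← h4]
    exact h5
  have hA : ∀ w ∈ W, A w ∈ W := fun w hw => (key ⟨w, hw⟩).1
  refine ⟨A.restrict hA, fun w => rfl, fun v w => ?_⟩
  obtain ⟨h, h2⟩ := key v
  apply Subtype.ext
  exact sub_eq_iff_eq_add.mp (h2 w (hA w w.2))
end

section
/- Let W ⊆ V be a subspace with a Lie bracket [·,·] and L_W its lifted Dirac structure. If δ : W → W is a derivation of (W,[·,·]) (δ[v,w] = [δ(v),w] + [v,δ(w)] for all v,w ∈ W), then for every A ∈ End(V) extending δ (i.e. A(w) = δ(w) for all w ∈ W) and every u ∈ V, the element (A,u) lies in the normalizer N_{L_W}. -/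
variable {V : Type*} [AddCommGroup V] [Module ℝ V] [FiniteDimensional ℝ V]

/-- Every derivation `δ` of `(W,[·,·])` lifts to the normalizer of `L_W`: any
`A ∈ End(V)` extending `δ`, together with any `u ∈ V`, gives `(A,u) ∈ N_{L_W}`. -/
theorem derivation_lifts_to_normalizer (W : Submodule ℝ V) (br : W →ₗ[ℝ] W →ₗ[ℝ] W)
    (hskew : ∀ v w : W, br v w = - br w v)
    (hjacobi : ∀ u v w : W, br u (br v w) + br v (br w u) + br w (br u v) = 0)
    (δ : W →ₗ[ℝ] W)
    (hder : ∀ v w : W, δ (br v w) = br (δ v) w + br v (δ w))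
    (A : V →ₗ[ℝ] V) (hA : ∀ w : W, A w = (δ w : V)) (u : V) :
    ∀ l ∈ liftSet W br, obr (A, u) l ∈ liftSet W br := by
  rintro ⟨B, v⟩ ⟨hv, hB⟩
  have hv' : v ∈ W := hv
  have hB' : ∀ w : W, B w = (br ⟨v, hv'⟩ w : V) := hB
  have hAv : A v = (δ ⟨v, hv'⟩ : V) := hA ⟨v, hv'⟩
  have hm : A v ∈ W := by
    rw [hAv]
    exact (δ ⟨v, hv'⟩).2
  refine ⟨hm, fun w => ?_⟩
  have he : (⟨A v, hm⟩ : W) = δ ⟨v, hv'⟩ := Subtype.ext hAv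
  change A (B w) - B (A w) = (br ⟨A v, hm⟩ w : V)
  rw [he, hB', hA, hA, hB', hder]
  simp
end

section
/- Let L ⊆ ℰ be a Dirac structure and X ∈ ℰ. Then X belongs to the normalizer N_L if and only if the 1-cochain ω_X(l) = ⟨X,l⟩ is closed, i.e. if and only if ρ(l₁)(⟨X,l₂⟩) − ρ(l₂)(⟨X,l₁⟩) − ⟨X,⦃l₁,l₂⦄⟩ = 0 for all l₁, l₂ ∈ L. -/
variable {V : Type*} [AddCommGroup V] [Module ℝ V] [FiniteDimensional ℝ V]

/-- For a Dirac structure `L` and `X ∈ ℰ`: `X ∈ N_L` if and only if the 1-cochain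
`ω_X(l) = ⟨X,l⟩` is closed, i.e.
`ρ(l₁)(⟨X,l₂⟩) − ρ(l₂)(⟨X,l₁⟩) − ⟨X,⦃l₁,l₂⦄⟩ = 0` for all `l₁, l₂ ∈ L`. -/
theorem normalizer_iff_closed_cochain (L : Submodule ℝ ((V →ₗ[ℝ] V) × V))
    (hL : (L : Set ((V →ₗ[ℝ] V) × V)) = perpSet (L : Set ((V →ₗ[ℝ] V) × V)))
    (hclosed : ∀ X ∈ L, ∀ Y ∈ L, obr X Y ∈ L)
    (X : (V →ₗ[ℝ] V) × V) :
    (∀ l ∈ L, obr X l ∈ L) ↔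
      (∀ l₁ ∈ L, ∀ l₂ ∈ L,
        l₁.1 (opair X l₂) - l₂.1 (opair X l₁) - opair X (obr l₁ l₂) = 0) := by
  have key : ∀ l₁ l₂ : (V →ₗ[ℝ] V) × V,
      l₁.1 (opair X l₂) - l₂.1 (opair X l₁) - opair X (obr l₁ l₂) = - opair (obr X l₁) l₂ := by
    intro l₁ l₂
    simp only [opair, obr, map_smul, map_add, LinearMap.sub_apply, LinearMap.comp_apply]
    module
  have hmem : ∀ Y, Y ∈ L ↔ ∀ l ∈ L, opair Y l = 0 := by
    intro Y
    rw [← SetLike.mem_coe, hL]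
    simp only [perpSet, Set.mem_ofPred_eq, SetLike.mem_coe]
  simp only [key, neg_eq_zero]
  exact forall₂_congr fun l _ => hmem _
end

section
/- Let W ⊆ V be a subspace with a Lie bracket [·,·], L_W its lifted Dirac structure, and (A,u) ∈ N_{L_W}. Then the 1-cochain ω_{(A,u)}(l) = ⟨(A,u),l⟩ on L_W is a coboundary — i.e. there exists e ∈ V such that ⟨(A,u),(B,v)⟩ = B(e) for all (B,v) ∈ L_W — if and only if the restriction of A to W is an inner derivation of (W,[·,·]), i.e. there exists v₀ ∈ W with A(w) = [v₀,w] for all w ∈ W. -/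
variable {V : Type*} [AddCommGroup V] [Module ℝ V] [FiniteDimensional ℝ V]

/-- For `(A,u)` in the normalizer of `L_W`, the 1-cochain `ω_{(A,u)}(l) = ⟨(A,u),l⟩`
is a coboundary — i.e. there is `e ∈ V` with `⟨(A,u),l⟩ = l.1(e)` for all `l ∈ L_W` —
if and only if `A` restricts to an inner derivation of `(W,[·,·])`. -/
theorem coboundary_iff_inner (W : Submodule ℝ V) (br : W →ₗ[ℝ] W →ₗ[ℝ] W)
    (hskew : ∀ v w : W, br v w = - br w v)
    (hjacobi : ∀ u v w : W, br u (br v w) + br v (br w u) + br w (br u v) = 0)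
    (A : V →ₗ[ℝ] V) (u : V)
    (hnorm : ∀ l ∈ liftSet W br, obr (A, u) l ∈ liftSet W br) :
    (∃ e : V, ∀ l ∈ liftSet W br, opair (A, u) l = l.1 e) ↔
      (∃ v₀ : W, ∀ w : W, A w = (br v₀ w : V)) := by
  obtain ⟨p, hp⟩ := LinearMap.exists_extend (p := W) (LinearMap.id : W →ₗ[ℝ] W)
  have hpw : ∀ w : W, p (w : V) = w := fun w => LinearMap.congr_fun hp w
  constructor
  · rintro ⟨e, he⟩
    have key : ∀ l ∈ liftSet W br, A l.2 = l.1 ((2 : ℝ) • e - u) := by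
      intro l hl
      have h := he l hl
      simp only [opair] at h
      rw [map_sub, map_smul, ← h, smul_smul]
      norm_num
    have h1 := key (LinearMap.id - W.subtype ∘ₗ p, 0) ⟨W.zero_mem, fun w => by
      have : (⟨0, W.zero_mem⟩ : W) = 0 := rfl
      simp [hpw, this]⟩
    simp only [map_zero, LinearMap.sub_apply, LinearMap.id_apply, LinearMap.comp_apply,
      Submodule.subtype_apply] at h1
    have hf := (sub_eq_zero.mp h1.symm)
    refine ⟨-p ((2 : ℝ) • e - u), fun w => ?_⟩
    have h2 := key (W.subtype ∘ₗ br w ∘ₗ p, (w : V)) ⟨w.2, fun w' => by simp [hpw]⟩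
    simp only [LinearMap.comp_apply, Submodule.subtype_apply] at h2
    rw [h2, hskew]
    simp
  · rintro ⟨v₀, h⟩
    refine ⟨(1/2 : ℝ) • (u - (v₀ : V)), ?_⟩
    rintro ⟨B, v⟩ ⟨hv, hB⟩
    have h1 := h ⟨v, hv⟩
    have h2 := hB v₀
    simp only at h1 h2
    simp only [opair]
    rw [map_smul, map_sub, h1, h2, hskew v₀]
    congr 1
    push_cast
    abel
end

section
/- Let W ⊆ V be a subspace with a Lie bracket [·,·] and L_W its lifted Dirac structure, let Ω : W × W → W be a bilinear antisymmetric map, and let X = (A,u) ∈ ℰ. Suppose Ω(𝐛(l₁), 𝐛(l₂)) = −⟨⦃X,l₁⦄, l₂⟩ for all l₁, l₂ ∈ L_W. Then A(W) ⊆ W and Ω(a,b) = (1/2)·([A(a),b] + [a,A(b)] − A([a,b])) for all a, b ∈ W. -/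
variable {V : Type*} [AddCommGroup V] [Module ℝ V] [FiniteDimensional ℝ V]

/-- If `Ω(𝐛(l₁),𝐛(l₂)) = −⟨⦃X,l₁⦄,l₂⟩` for all `l₁, l₂ ∈ L_W`, where `X = (A,u)`,
then `A(W) ⊆ W` and `Ω(a,b) = (1/2)·([A(a),b] + [a,A(b)] − A([a,b]))` on `W`. -/
theorem coboundary_deformation_formula (W : Submodule ℝ V) (br : W →ₗ[ℝ] W →ₗ[ℝ] W)
    (hskew : ∀ v w : W, br v w = - br w v)
    (hjacobi : ∀ u v w : W, br u (br v w) + br v (br w u) + br w (br u v) = 0)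
    (Ω : W →ₗ[ℝ] W →ₗ[ℝ] W) (hΩ : ∀ a b : W, Ω a b = - Ω b a)
    (A : V →ₗ[ℝ] V) (u : V)
    (hco : ∀ (B₁ : V →ₗ[ℝ] V) (v₁ : W), (B₁, (v₁ : V)) ∈ liftSet W br →
      ∀ (B₂ : V →ₗ[ℝ] V) (v₂ : W), (B₂, (v₂ : V)) ∈ liftSet W br →
        (Ω v₁ v₂ : V) = - opair (obr (A, u) (B₁, (v₁ : V))) (B₂, (v₂ : V))) :
    ∃ δ : W →ₗ[ℝ] W,
      (∀ w : W, (δ w : V) = A w) ∧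
      (∀ a b : W, Ω a b = (1/2 : ℝ) • (br (δ a) b + br a (δ b) - δ (br a b))) := by
  obtain ⟨p, hp⟩ := W.subtype.exists_leftInverse_of_injective (by simp)
  have hp' : ∀ w : W, p w = w := fun w => by simpa using LinearMap.congr_fun hp w
  have hlift : ∀ v : W, (W.subtype ∘ₗ br v ∘ₗ p, (v : V)) ∈ liftSet W br := by
    intro v
    refine ⟨v.2, fun w => ?_⟩
    simp [hp']
  have hzero : (LinearMap.id - W.subtype ∘ₗ p, ((0 : W) : V)) ∈ liftSet W br := by
    refine ⟨(0 : W).2, fun w => ?_⟩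
    have h0 : (⟨((0 : W) : V), (0 : W).2⟩ : W) = 0 := rfl
    simp only [h0]
    simp [hp']
  have hA : ∀ w : W, A w = (p (A w) : V) := by
    intro w
    have h := hco _ 0 hzero _ w (hlift w)
    simp [opair, obr, hp'] at h
    first
      | exact sub_eq_zero.mp h
      | exact (sub_eq_zero.mp h).symm
      | exact h
      | exact h.symm
  refine ⟨p ∘ₗ A ∘ₗ W.subtype, fun w => (hA w).symm, fun a b => ?_⟩
  have h := hco _ a (hlift a) _ b (hlift b)
  apply Subtype.ext
  rw [h]
  have hs : (br (p (A a)) b : V) = - (br b (p (A a)) : V) := by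
    rw [hskew]; rfl
  simp only [opair, obr, LinearMap.sub_apply, LinearMap.comp_apply, Submodule.subtype_apply, hp',
    Submodule.coe_smul, Submodule.coe_sub, Submodule.coe_add, hs, ← hA]
  module
end
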